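/- Assume additionally: every e_j has a continuous representative on [0,L] with sup_j ‖e_j‖_∞ ≤ M for some M > 0; there are constants c > 0, c₁ > 0 with ‖e_j − e_j'‖_∞ ≤ c/j and λ_j ≥ c₁·j² for all j ≥ 1; and there is an integer D ≥ 1 with b_n = e_n' for all n > D. Fix x₀ ∈ (0,L) and for small ε > 0 let f_ε := (1/ε)·𝟙_{[x₀−ε/2, x₀+ε/2]} ∈ L²(0,L). Then lim_{ε→0⁺} ⟨V∞ f_ε, f_ε⟩ = σ² Σ_{j₁=1}^∞ Σ_{j₂=1}^∞ [e_{j₁}(x₀)·e_{j₂}(x₀) / (λ_{j₁} + λ_{j₂} − 2α)] · (Σ_{n=1}^∞ q_n ⟨e_{j₁}, b_n⟩ ⟨e_{j₂}, b_n⟩), all series converging. (This is the paper's Corollary 3.3, the pointwise early-warning sign.) -/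

import Mathlib

open scoped RealInnerProductSpace
open MeasureTheory Filter

/-- The Hilbert space `H := L²(0,L)`. -/
abbrev HL (L : ℝ) : Type := Lp ℝ 2 (volume.restrict (Set.Icc (0:ℝ) L))

/-- The Dirichlet eigenfunctions of the Laplacian, `e'_{k+1}(x) = √(2/L)·sin(π(k+1)x/L)`. -/
noncomputable def sineEF (L : ℝ) (k : ℕ) (x : ℝ) : ℝ :=
  Real.sqrt (2 / L) * Real.sin (Real.pi * (k + 1) * x / L)

/-- The semigroup `S(t)f := Σ_j e^{(α−λ_j)t}⟨f, e_j⟩ e_j`. -/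
noncomputable def Sop {H : Type*} [NormedAddCommGroup H] [InnerProductSpace ℝ H]
    (e : ℕ → H) (lam : ℕ → ℝ) (α : ℝ) (t : ℝ) (f : H) : H :=
  ∑' j, (Real.exp ((α - lam j) * t) * ⟪f, e j⟫) • e j

/-- The interval average of a continuous function. -/
lemma aux_inner (L : ℝ) (u v : HL L) (g : ℝ → ℝ)
    (hv : ⇑v =ᵐ[volume.restrict (Set.Icc (0:ℝ) L)] g) (x₀ ε : ℝ) (hε : 0 < ε)
    (hsub : Set.Icc (x₀ - ε / 2) (x₀ + ε / 2) ⊆ Set.Icc 0 L)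
    (hu : ⇑u =ᵐ[volume.restrict (Set.Icc (0:ℝ) L)]
      (Set.Icc (x₀ - ε / 2) (x₀ + ε / 2)).indicator (fun _ => 1 / ε)) :
    ⟪u, v⟫ = (1 / ε) * ∫ x in (x₀ - ε / 2)..(x₀ + ε / 2), g x := by
  rw [MeasureTheory.L2.inner_def]
  have h1 : (fun a => ⟪u a, v a⟫) =ᵐ[volume.restrict (Set.Icc (0:ℝ) L)]
      (Set.Icc (x₀ - ε / 2) (x₀ + ε / 2)).indicator (fun x => 1 / ε * g x) := by
    filter_upwards [hu, hv] with x h1 h2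
    rw [h1, h2]
    by_cases hx : x ∈ Set.Icc (x₀ - ε / 2) (x₀ + ε / 2)
    · simp only [Set.indicator_of_mem hx]
      simp [mul_comm]
    · simp only [Set.indicator_of_notMem hx]
      simp
  rw [integral_congr_ae h1, integral_indicator measurableSet_Icc,
    Measure.restrict_restrict measurableSet_Icc, Set.inter_eq_left.mpr hsub,
    integral_Icc_eq_integral_Ioc, ← intervalIntegral.integral_of_le (by linarith),
    intervalIntegral.integral_const_mul]

lemma aux_avg (g : ℝ → ℝ) (hg : Continuous g) (x₀ ε y δ : ℝ) (hε : 0 < ε)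
    (h : ∀ x ∈ Set.Icc (x₀ - ε / 2) (x₀ + ε / 2), |g x - y| ≤ δ) :
    |(1 / ε) * (∫ x in (x₀ - ε / 2)..(x₀ + ε / 2), g x) - y| ≤ δ := by
  have h1 : (1 / ε) * (∫ x in (x₀ - ε / 2)..(x₀ + ε / 2), g x) - y
      = (1 / ε) * ∫ x in (x₀ - ε / 2)..(x₀ + ε / 2), (g x - y) := by
    rw [intervalIntegral.integral_sub (hg.intervalIntegrable _ _) (by simp)]
    simp
    field_simp
  rw [h1]
  have h2 : ‖∫ x in (x₀ - ε / 2)..(x₀ + ε / 2), (g x - y)‖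
      ≤ δ * |(x₀ + ε / 2) - (x₀ - ε / 2)| := by
    apply intervalIntegral.norm_integral_le_of_norm_le_const
    intro x hx
    rw [Set.uIoc_of_le (by linarith)] at hx
    exact h x ⟨hx.1.le, hx.2⟩
  rw [show (x₀ + ε / 2) - (x₀ - ε / 2) = ε by ring, abs_of_pos hε, Real.norm_eq_abs] at h2
  rw [abs_mul, abs_of_pos (by positivity : 0 < 1 / ε)]
  calc 1 / ε * _ ≤ 1 / ε * (δ * ε) := by gcongr
    _ = δ := by field_simp

lemma aux_avg_tendsto (g : ℝ → ℝ) (hg : Continuous g) (x₀ : ℝ) :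
    Tendsto (fun ε : ℝ => (1 / ε) * ∫ x in (x₀ - ε / 2)..(x₀ + ε / 2), g x)
      (nhdsWithin 0 (Set.Ioi 0)) (nhds (g x₀)) := by
  rw [Metric.tendsto_nhds]
  intro δ hδ
  obtain ⟨r, hr, hr'⟩ := Metric.continuousAt_iff.mp (hg.continuousAt (x := x₀)) (δ / 2) (by positivity)
  filter_upwards [Ioo_mem_nhdsGT hr] with ε hε
  rw [Real.dist_eq]
  refine lt_of_le_of_lt (aux_avg g hg x₀ ε (g x₀) (δ / 2) hε.1 ?_) (by linarith)
  intro x hx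
  have := hr' (x := x) (by
    rw [Real.dist_eq, abs_lt]
    constructor <;> linarith [hx.1, hx.2, hε.1, hε.2])
  rw [Real.dist_eq] at this
  exact this.le

lemma aux_mu (c₁ : ℝ) (hc₁ : 0 < c₁) (lam : ℕ → ℝ)
    (hgrow : ∀ j : ℕ, c₁ * ((j : ℝ) + 1) ^ 2 ≤ lam j)
    (hlam : ∀ j, lam 0 ≤ lam j) (α : ℝ) (hα : α < lam 0) :
    ∃ κ : ℝ, 0 < κ ∧ ∀ j : ℕ, κ * ((j : ℝ) + 1) ^ 2 ≤ lam j - α := by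
  have h0 : 0 < lam 0 := by
    have := hgrow 0
    norm_num at this
    linarith
  rcases le_or_gt α 0 with h | h
  · exact ⟨c₁, hc₁, fun j => by linarith [hgrow j]⟩
  · have hpos : 0 < 1 - α / lam 0 := by
      rw [sub_pos, div_lt_one h0]
      exact hα
    refine ⟨c₁ * (1 - α / lam 0), by positivity, fun j => ?_⟩
    calc c₁ * (1 - α / lam 0) * ((j : ℝ) + 1) ^ 2
        = (c₁ * ((j : ℝ) + 1) ^ 2) * (1 - α / lam 0) := by ring
      _ ≤ lam j * (1 - α / lam 0) := by
          gcongr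
          exact hgrow j
      _ = lam j - α * (lam j / lam 0) := by ring
      _ ≤ lam j - α * 1 := by
          gcongr
          rw [one_le_div h0]
          exact hlam j
      _ = lam j - α := by ring

lemma aux_rpow (x y : ℝ) (hx : 0 < x) (hy : 0 < y) :
    1 / x / (x ^ 2 + y ^ 2) ≤ x ^ (-(3 / 2) : ℝ) * y ^ (-(3 / 2) : ℝ) := by
  have key : x ^ (1 / 2 : ℝ) * y ^ (3 / 2 : ℝ) ≤ x ^ 2 + y ^ 2 := by
    rcases le_total x y with h | h
    · calc x ^ (1 / 2 : ℝ) * y ^ (3 / 2 : ℝ) ≤ y ^ (1 / 2 : ℝ) * y ^ (3 / 2 : ℝ) := by gcongr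
        _ = y ^ 2 := by
          rw [← Real.rpow_add hy]
          norm_num
        _ ≤ _ := by nlinarith
    · calc x ^ (1 / 2 : ℝ) * y ^ (3 / 2 : ℝ) ≤ x ^ (1 / 2 : ℝ) * x ^ (3 / 2 : ℝ) := by gcongr
        _ = x ^ 2 := by
          rw [← Real.rpow_add hx]
          norm_num
        _ ≤ _ := by nlinarith
  calc 1 / x / (x ^ 2 + y ^ 2) ≤ 1 / x / (x ^ (1 / 2 : ℝ) * y ^ (3 / 2 : ℝ)) := by gcongr
    _ = x ^ (-(3 / 2) : ℝ) * y ^ (-(3 / 2) : ℝ) := by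
      rw [Real.rpow_neg hx.le, Real.rpow_neg hy.le,
        show (3 / 2 : ℝ) = 1 + 1 / 2 by norm_num, Real.rpow_add hx, Real.rpow_one]
      field_simp

lemma aux_bound_summable (μ : ℕ → ℝ) (κ : ℝ) (hκ : 0 < κ)
    (hμ : ∀ j : ℕ, κ * ((j : ℝ) + 1) ^ 2 ≤ μ j) (qs C : ℝ) (hqs : 0 ≤ qs) (hC : 0 ≤ C) :
    Summable (fun p : ℕ × ℕ => ((if p.1 = p.2 then qs else 0) + C / ((p.1 : ℝ) + 1))
      / (μ p.1 + μ p.2)) := by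
  have hpos : ∀ j, 0 < μ j := fun j => lt_of_lt_of_le (by positivity) (hμ j)
  simp only [add_div]
  apply Summable.add
  · have hinj : Function.Injective (fun i : ℕ => (i, i)) := fun a b h => (Prod.ext_iff.mp h).1
    rw [← hinj.summable_iff]
    · have hs : Summable (fun n : ℕ => 1 / ((n : ℝ) + 1) ^ 2) := by
        have := (summable_nat_add_iff 1).mpr (Real.summable_one_div_nat_pow.mpr (one_lt_two))
        simpa using this
      refine Summable.of_nonneg_of_le (fun i => ?_) (fun i => ?_) (hs.mul_left (qs / κ))
      · have := hpos i
        simp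
        positivity
      · have := hpos i
        simp only [Function.comp, if_true]
        calc qs / (μ i + μ i) ≤ qs / (κ * ((i : ℝ) + 1) ^ 2) := by
              gcongr
              linarith [hμ i]
          _ = _ := by field_simp
    · rintro ⟨i, j⟩ h
      have : i ≠ j := fun hh => h ⟨i, by simp [hh]⟩
      simp [this]
  · have hs : Summable (fun n : ℕ => ((n : ℝ) + 1) ^ (-(3 / 2) : ℝ)) := by
      have := (summable_nat_add_iff 1).mpr
        (Real.summable_nat_rpow (p := -(3 / 2)).mpr (by norm_num))
      simpa using this
    have hs2 := (hs.mul_of_nonneg hs (fun n => by positivity) (fun n => by positivity)).mul_left (C / κ)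
    refine Summable.of_nonneg_of_le (fun p => ?_) (fun p => ?_) hs2
    · have := hpos p.1
      have := hpos p.2
      positivity
    · calc C / ((p.1 : ℝ) + 1) / (μ p.1 + μ p.2)
          ≤ C / ((p.1 : ℝ) + 1) / (κ * ((p.1 : ℝ) + 1) ^ 2 + κ * ((p.2 : ℝ) + 1) ^ 2) := by
            gcongr
            · exact hμ _
            · exact hμ _
        _ = (C / κ) * (1 / ((p.1 : ℝ) + 1) / (((p.1 : ℝ) + 1) ^ 2 + ((p.2 : ℝ) + 1) ^ 2)) := by
            field_simp
        _ ≤ _ := by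
            have := aux_rpow ((p.1 : ℝ) + 1) ((p.2 : ℝ) + 1) (by positivity) (by positivity)
            gcongr

section hilb
variable {H : Type*} [NormedAddCommGroup H] [InnerProductSpace ℝ H] [CompleteSpace H]

lemma aux_A_hasSum (b : HilbertBasis ℕ ℝ H) (Q : H →L[ℝ] H)
    (hQ_sa : ∀ f h : H, ⟪Q f, h⟫ = ⟪f, Q h⟫) (q : ℕ → ℝ)
    (hQ_eig : ∀ n, Q (b n) = q n • b n) (u v : H) :
    HasSum (fun n => q n * ⟪u, b n⟫ * ⟪v, b n⟫) ⟪Q u, v⟫ := by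
  have h := b.hasSum_inner_mul_inner (Q u) v
  have heq : (fun n => q n * ⟪u, b n⟫ * ⟪v, b n⟫) = fun n => ⟪Q u, b n⟫ * ⟪b n, v⟫ := by
    funext n
    rw [hQ_sa, hQ_eig, inner_smul_right, real_inner_comm v (b n)]
  rw [heq]
  exact h

lemma aux_A_bound (e b : HilbertBasis ℕ ℝ H) (Q : H →L[ℝ] H) (q : ℕ → ℝ) (qs K : ℝ)
    (hq : ∀ n, 0 ≤ q n) (hq' : ∀ n, q n ≤ qs)
    (hQ_eig : ∀ n, Q (b n) = q n • b n)
    (hK : ∀ n : ℕ, ‖e n - b n‖ ≤ K / ((n : ℝ) + 1)) (i j : ℕ) :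
    |⟪Q (e i), e j⟫| ≤ (if i = j then qs else 0) + ((‖Q‖ + qs) * K) / ((i : ℝ) + 1) := by
  have hqs : 0 ≤ qs := (hq 0).trans (hq' 0)
  have h1 : Q (e i) = q i • e i + (Q (e i - b i) - q i • (e i - b i)) := by
    rw [map_sub, hQ_eig, smul_sub]
    abel
  have hn : ‖Q (e i - b i) - q i • (e i - b i)‖ ≤ ((‖Q‖ + qs) * K) / ((i : ℝ) + 1) := by
    calc _ ≤ ‖Q (e i - b i)‖ + ‖q i • (e i - b i)‖ := norm_sub_le _ _
      _ ≤ ‖Q‖ * ‖e i - b i‖ + qs * ‖e i - b i‖ := by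
          gcongr
          · exact Q.le_opNorm _
          · rw [norm_smul, Real.norm_eq_abs, abs_of_nonneg (hq i)]
            gcongr
            exact hq' i
      _ = (‖Q‖ + qs) * ‖e i - b i‖ := by ring
      _ ≤ (‖Q‖ + qs) * (K / ((i : ℝ) + 1)) := by
          gcongr
          exact hK i
      _ = _ := by ring
  rw [h1, inner_add_left, inner_smul_left]
  refine (abs_add_le _ _).trans (add_le_add ?_ ?_)
  · have := orthonormal_iff_ite.mp e.orthonormal i j
    rw [this]
    split_ifs
    · simp [abs_of_nonneg (hq i), hq' i]
    · simp
  · refine (abs_real_inner_le_norm _ _).trans ?_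
    rw [e.orthonormal.1 j, mul_one]
    exact hn

lemma aux_exp_integral (m : ℝ) (hm : 0 < m) :
    IntegrableOn (fun t : ℝ => Real.exp (-m * t)) (Set.Ioi 0) ∧
    ∫ t in Set.Ioi (0:ℝ), Real.exp (-m * t) = 1 / m := by
  refine ⟨integrableOn_exp_mul_Ioi (by linarith) 0, ?_⟩
  rw [integral_exp_mul_Ioi (by linarith) 0]
  simp

/-- Expansion of the integrand. -/
lemma aux_integrand (e : HilbertBasis ℕ ℝ H) (Q : H →L[ℝ] H) (lam : ℕ → ℝ) (α κ : ℝ)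
    (hκ : 0 < κ) (hμ : ∀ j : ℕ, κ * ((j : ℝ) + 1) ^ 2 ≤ lam j - α) (f : H) (t : ℝ) (ht : 0 < t) :
    HasSum (fun p : ℕ × ℕ => (⟪f, e p.1⟫ * ⟪f, e p.2⟫ * ⟪Q (e p.1), e p.2⟫)
        * Real.exp (-((lam p.1 - α) + (lam p.2 - α)) * t))
      ⟪Q (Sop (fun j => e j) lam α t f), Sop (fun j => e j) lam α t f⟫ := by
  set w : ℕ → ℝ := fun j => Real.exp ((α - lam j) * t) * ⟪f, e j⟫ with hw
  have hs : Summable (fun n : ℕ => 1 / ((n : ℝ) + 1) ^ 2) := by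
    have := (summable_nat_add_iff 1).mpr (Real.summable_one_div_nat_pow.mpr (one_lt_two))
    simpa using this
  have hwb : ∀ j, |⟪f, e j⟫| ≤ ‖f‖ := fun j => by
    have := abs_real_inner_le_norm f (e j)
    rwa [e.orthonormal.1 j, mul_one] at this
  have hws : Summable (fun j => ‖w j‖) := by
    refine Summable.of_nonneg_of_le (fun j => norm_nonneg _) (fun j => ?_)
      (hs.mul_left (‖f‖ / (κ * t)))
    rw [hw, Real.norm_eq_abs, abs_mul, abs_of_pos (Real.exp_pos _)]
    have h1 : Real.exp ((α - lam j) * t) ≤ 1 / (κ * ((j : ℝ) + 1) ^ 2 * t) := by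
      have hp : 0 < κ * ((j : ℝ) + 1) ^ 2 * t := by positivity
      calc Real.exp ((α - lam j) * t) ≤ Real.exp (-(κ * ((j : ℝ) + 1) ^ 2 * t)) := by
            apply Real.exp_le_exp.mpr
            nlinarith [hμ j]
        _ = 1 / Real.exp (κ * ((j : ℝ) + 1) ^ 2 * t) := by rw [Real.exp_neg, one_div]
        _ ≤ _ := by
            gcongr
            linarith [Real.add_one_le_exp (κ * ((j : ℝ) + 1) ^ 2 * t)]
    calc _ ≤ 1 / (κ * ((j : ℝ) + 1) ^ 2 * t) * ‖f‖ := by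
          gcongr
          exact hwb j
      _ = _ := by field_simp
  have hS : Summable (fun j => w j • e j) := by
    apply Summable.of_norm
    simpa [norm_smul, e.orthonormal.1] using hws
  have hS' : HasSum (fun j => w j • e j) (Sop (fun j => e j) lam α t f) := hS.hasSum
  set s := Sop (fun j => e j) lam α t f with hsdef
  have hsum : Summable (fun p : ℕ × ℕ => (w p.1 * w p.2) * ⟪Q (e p.1), e p.2⟫) := by
    have h2 := hws.mul_of_nonneg hws (fun _ => norm_nonneg _) (fun _ => norm_nonneg _)
    refine Summable.of_norm_bounded (h2.mul_right ‖Q‖) (fun p => ?_)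
    rw [norm_mul, norm_mul]
    gcongr
    refine (norm_inner_le_norm _ _).trans ?_
    rw [e.orthonormal.1, mul_one]
    have := Q.le_opNorm (e p.1)
    rwa [e.orthonormal.1, mul_one] at this
  have heq : (fun p : ℕ × ℕ => (⟪f, e p.1⟫ * ⟪f, e p.2⟫ * ⟪Q (e p.1), e p.2⟫)
        * Real.exp (-((lam p.1 - α) + (lam p.2 - α)) * t))
      = fun p : ℕ × ℕ => (w p.1 * w p.2) * ⟪Q (e p.1), e p.2⟫ := by
    funext p
    rw [show -((lam p.1 - α) + (lam p.2 - α)) * t = (α - lam p.1) * t + (α - lam p.2) * t by ring,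
      Real.exp_add]
    simp only [hw]
    ring
  rw [heq]
  have hin : ∀ i, HasSum (fun j => (w i * w j) * ⟪Q (e i), e j⟫) (w i * ⟪Q (e i), s⟫) := by
    intro i
    have := (hS'.mapL (innerSL ℝ (Q (e i)))).mul_left (w i)
    simp only [innerSL_apply_apply, inner_smul_right] at this
    simpa [mul_assoc] using this
  have hout : HasSum (fun i => w i * ⟪Q (e i), s⟫) ⟪Q s, s⟫ := by
    have := (hS'.mapL Q).mapL (innerSL ℝ s)
    simp only [innerSL_apply_apply, map_smul, inner_smul_right] at this
    simpa [real_inner_comm] using this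
  have := hsum.hasSum
  rwa [(this.prod_fiberwise hin).unique hout] at this

lemma aux_integral (e : HilbertBasis ℕ ℝ H) (Q : H →L[ℝ] H) (lam : ℕ → ℝ) (α κ : ℝ)
    (hκ : 0 < κ) (hμ : ∀ j : ℕ, κ * ((j : ℝ) + 1) ^ 2 ≤ lam j - α)
    (hA : Summable (fun p : ℕ × ℕ => |⟪Q (e p.1), e p.2⟫| / ((lam p.1 - α) + (lam p.2 - α))))
    (f : H) :
    ∫ t in Set.Ioi (0:ℝ), ⟪Q (Sop (fun j => e j) lam α t f), Sop (fun j => e j) lam α t f⟫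
      = ∑' p : ℕ × ℕ, (⟪f, e p.1⟫ * ⟪f, e p.2⟫ * ⟪Q (e p.1), e p.2⟫)
          / ((lam p.1 - α) + (lam p.2 - α)) := by
  have hpos : ∀ j, 0 < lam j - α := fun j => lt_of_lt_of_le (by positivity) (hμ j)
  have hwb : ∀ j, |⟪f, e j⟫| ≤ ‖f‖ := fun j => by
    have := abs_real_inner_le_norm f (e j)
    rwa [e.orthonormal.1 j, mul_one] at this
  have hp2 : ∀ p : ℕ × ℕ, 0 < (lam p.1 - α) + (lam p.2 - α) :=
    fun p => add_pos (hpos _) (hpos _)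
  set g : ℕ × ℕ → ℝ → ℝ := fun p t => (⟪f, e p.1⟫ * ⟪f, e p.2⟫ * ⟪Q (e p.1), e p.2⟫)
        * Real.exp (-((lam p.1 - α) + (lam p.2 - α)) * t) with hg
  have hint : ∀ p, Integrable (g p) (volume.restrict (Set.Ioi 0)) := fun p =>
    (aux_exp_integral _ (hp2 p)).1.const_mul _
  have hval : ∀ p, ∫ t in Set.Ioi (0:ℝ), g p t = (⟪f, e p.1⟫ * ⟪f, e p.2⟫ * ⟪Q (e p.1), e p.2⟫)
          / ((lam p.1 - α) + (lam p.2 - α)) := fun p => by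
    simp only [hg]
    rw [integral_const_mul, (aux_exp_integral _ (hp2 p)).2, mul_one_div]
  have hnorm : ∀ p, ∫ t in Set.Ioi (0:ℝ), ‖g p t‖ = |⟪f, e p.1⟫ * ⟪f, e p.2⟫ * ⟪Q (e p.1), e p.2⟫|
          / ((lam p.1 - α) + (lam p.2 - α)) := fun p => by
    simp only [hg, norm_mul _ (Real.exp _), Real.norm_eq_abs, Real.abs_exp]
    rw [integral_const_mul, (aux_exp_integral _ (hp2 p)).2, mul_one_div]
  have hsumm : Summable (fun p => ∫ t in Set.Ioi (0:ℝ), ‖g p t‖) := by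
    simp only [hnorm]
    refine Summable.of_nonneg_of_le (fun p => ?_) (fun p => ?_) (hA.mul_left (‖f‖ * ‖f‖))
    · have := hp2 p
      positivity
    · have := hp2 p
      rw [abs_mul, abs_mul, ← mul_div_assoc]
      gcongr
      · exact hwb _
      · exact hwb _
  have hmain := integral_tsum_of_summable_integral_norm hint hsumm
  simp only [hval] at hmain
  rw [hmain]
  apply setIntegral_congr_fun measurableSet_Ioi
  intro t ht
  exact (aux_integrand e Q lam α κ hκ hμ f t ht).tsum_eq.symm

end hilb

lemma aux_close (L : ℝ) (e b : HilbertBasis ℕ ℝ (HL L)) (ec : ℕ → ℝ → ℝ)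
    (hec_ae : ∀ j, ⇑(e j) =ᵐ[volume.restrict (Set.Icc (0:ℝ) L)] ec j)
    (c : ℝ) (hc : 0 < c)
    (hclose : ∀ j, ∀ x ∈ Set.Icc (0:ℝ) L, |ec j x - sineEF L j x| ≤ c / (j + 1))
    (D : ℕ) (hb_sine : ∀ n, D < n + 1 →
      ⇑(b n) =ᵐ[volume.restrict (Set.Icc (0:ℝ) L)] sineEF L n) :
    ∃ K : ℝ, 0 ≤ K ∧ ∀ n : ℕ, ‖e n - b n‖ ≤ K / ((n : ℝ) + 1) := by
  set m : ℝ := (measureUnivNNReal (volume.restrict (Set.Icc (0:ℝ) L)) : ℝ) ^ (ENNReal.toReal 2)⁻¹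
    with hm
  have hm0 : 0 ≤ m := by positivity
  refine ⟨m * c + 2 * D, by positivity, fun n => ?_⟩
  rcases lt_or_ge D (n + 1) with h | h
  · have h1 : ‖e n - b n‖ ≤ m * (c / ((n : ℝ) + 1)) := by
      have := Lp.norm_le_of_ae_bound (f := e n - b n) (C := c / ((n : ℝ) + 1)) (by positivity) (by
        filter_upwards [Lp.coeFn_sub (e n) (b n), hec_ae n, hb_sine n h,
          ae_restrict_mem measurableSet_Icc] with x h1 h2 h3 h4
        rw [h1, Pi.sub_apply, h2, h3]
        exact hclose n x h4)
      exact this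
    refine h1.trans ?_
    rw [← mul_div_assoc]
    gcongr
    have : (0:ℝ) ≤ D := by positivity
    linarith
  · have h1 : ‖e n - b n‖ ≤ 2 := by
      refine (norm_sub_le _ _).trans ?_
      rw [e.orthonormal.1, b.orthonormal.1]
      norm_num
    refine h1.trans ?_
    rw [le_div_iff₀ (by positivity)]
    have : (n : ℝ) + 1 ≤ D := by exact_mod_cast h
    nlinarith [mul_nonneg hm0 hc.le]

/-- Corollary 3.3 of the paper (the pointwise early-warning sign): with
`f_ε = (1/ε)·𝟙_{[x₀−ε/2, x₀+ε/2]}` one has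
`lim_{ε→0⁺}⟨V∞ f_ε, f_ε⟩ = σ² Σ_{j₁}Σ_{j₂} e_{j₁}(x₀)e_{j₂}(x₀)/(λ_{j₁}+λ_{j₂}−2α)
· Σ_n q_n⟨e_{j₁},b_n⟩⟨e_{j₂},b_n⟩`, all series converging. -/
theorem stmt_5 (L : ℝ) (hL : 0 < L)
    (e b : HilbertBasis ℕ ℝ (HL L))
    -- continuous representatives of the `e_j`, uniformly bounded by `M`
    (ec : ℕ → ℝ → ℝ) (hec_cont : ∀ j, Continuous (ec j))
    (hec_ae : ∀ j, ⇑(e j) =ᵐ[volume.restrict (Set.Icc (0:ℝ) L)] ec j)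
    (M : ℝ) (hM : 0 < M) (hec_bd : ∀ j, ∀ x ∈ Set.Icc (0:ℝ) L, |ec j x| ≤ M)
    -- `‖e_j − e_j'‖_∞ ≤ c/j` and `λ_j ≥ c₁ j²`
    (c c₁ : ℝ) (hc : 0 < c) (hc₁ : 0 < c₁)
    (lam : ℕ → ℝ)
    (hclose : ∀ j, ∀ x ∈ Set.Icc (0:ℝ) L, |ec j x - sineEF L j x| ≤ c / (j + 1))
    (hgrow : ∀ j : ℕ, c₁ * ((j : ℝ) + 1) ^ 2 ≤ lam j)
    (hlam : ∀ j, lam 0 ≤ lam j)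
    (α : ℝ) (hα : α < lam 0) (σ : ℝ) (hσ : 0 < σ)
    (Q : (HL L) →L[ℝ] (HL L)) (hQ_sa : ∀ f h : HL L, ⟪Q f, h⟫ = ⟪f, Q h⟫)
    (q : ℕ → ℝ) (qstar : ℝ)
    (hq_nonneg : ∀ n, 0 ≤ q n) (hq_bd : ∀ n, q n ≤ qstar)
    (hQ_eig : ∀ n, Q (b n) = q n • b n)
    -- `b_n = e_n'` for all `n > D`
    (D : ℕ) (hD : 1 ≤ D)
    (hb_sine : ∀ n, D < n + 1 →
      ⇑(b n) =ᵐ[volume.restrict (Set.Icc (0:ℝ) L)] sineEF L n)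
    (x₀ : ℝ) (hx₀ : x₀ ∈ Set.Ioo (0:ℝ) L)
    -- `F ε` is the `L²`-class of `f_ε = (1/ε)·𝟙_{[x₀−ε/2, x₀+ε/2]}`
    (F : ℝ → HL L)
    (hF : ∀ ε : ℝ, 0 < ε → ⇑(F ε) =ᵐ[volume.restrict (Set.Icc (0:ℝ) L)]
      (Set.Icc (x₀ - ε / 2) (x₀ + ε / 2)).indicator (fun _ => 1 / ε)) :
    (∀ j₁ j₂ : ℕ, Summable (fun n => q n * ⟪(e j₁ : HL L), b n⟫ * ⟪(e j₂ : HL L), b n⟫)) ∧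
    (∀ j₁ : ℕ, Summable (fun j₂ => ec j₁ x₀ * ec j₂ x₀ / (lam j₁ + lam j₂ - 2 * α)
        * ∑' n, q n * ⟪(e j₁ : HL L), b n⟫ * ⟪(e j₂ : HL L), b n⟫)) ∧
    Summable (fun j₁ => ∑' j₂, ec j₁ x₀ * ec j₂ x₀ / (lam j₁ + lam j₂ - 2 * α)
        * ∑' n, q n * ⟪(e j₁ : HL L), b n⟫ * ⟪(e j₂ : HL L), b n⟫) ∧
    Tendsto (fun ε : ℝ => σ ^ 2 * ∫ t in Set.Ioi (0:ℝ),
        ⟪Q (Sop (fun j => e j) lam α t (F ε)), Sop (fun j => e j) lam α t (F ε)⟫)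
      (nhdsWithin 0 (Set.Ioi 0))
      (nhds (σ ^ 2 * ∑' j₁, ∑' j₂, ec j₁ x₀ * ec j₂ x₀ / (lam j₁ + lam j₂ - 2 * α)
        * ∑' n, q n * ⟪(e j₁ : HL L), b n⟫ * ⟪(e j₂ : HL L), b n⟫)) := by
  obtain ⟨κ, hκ, hμ⟩ := aux_mu c₁ hc₁ lam hgrow hlam α hα
  obtain ⟨K, hK0, hK⟩ := aux_close L e b ec hec_ae c hc hclose D hb_sine
  have hqs : 0 ≤ qstar := (hq_nonneg 0).trans (hq_bd 0)
  have hAs := aux_A_hasSum b Q hQ_sa q hQ_eig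
  have hAb := aux_A_bound e b Q q qstar K hq_nonneg hq_bd hQ_eig hK
  have hpos : ∀ j, 0 < lam j - α := fun j => lt_of_lt_of_le (by positivity) (hμ j)
  have hp2 : ∀ p : ℕ × ℕ, 0 < (lam p.1 - α) + (lam p.2 - α) :=
    fun p => add_pos (hpos _) (hpos _)
  have hA : Summable (fun p : ℕ × ℕ =>
      |⟪Q (e p.1), e p.2⟫| / ((lam p.1 - α) + (lam p.2 - α))) := by
    refine Summable.of_nonneg_of_le (fun p => ?_) (fun p => ?_)
      (aux_bound_summable (fun j => lam j - α) κ hκ hμ qstar ((‖Q‖ + qstar) * K) hqs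
        (by positivity))
    · have := hp2 p
      positivity
    · have := hp2 p
      gcongr
      exact hAb p.1 p.2
  have hterm : ∀ j₁ j₂ : ℕ, ec j₁ x₀ * ec j₂ x₀ / (lam j₁ + lam j₂ - 2 * α)
        * ∑' n, q n * ⟪(e j₁ : HL L), b n⟫ * ⟪(e j₂ : HL L), b n⟫
      = (ec j₁ x₀ * ec j₂ x₀ * ⟪Q (e j₁), e j₂⟫) / ((lam j₁ - α) + (lam j₂ - α)) := by
    intro j₁ j₂
    rw [(hAs (e j₁) (e j₂)).tsum_eq,
      show lam j₁ + lam j₂ - 2 * α = (lam j₁ - α) + (lam j₂ - α) by ring]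
    ring
  have hx₀' : x₀ ∈ Set.Icc (0:ℝ) L := ⟨hx₀.1.le, hx₀.2.le⟩
  have hgen : ∀ (a : ℕ → ℝ), (∀ j, |a j| ≤ M) → ∀ p : ℕ × ℕ,
      ‖(a p.1 * a p.2 * ⟪Q (e p.1), e p.2⟫) / ((lam p.1 - α) + (lam p.2 - α))‖
      ≤ (M * M) * (|⟪Q (e p.1), e p.2⟫| / ((lam p.1 - α) + (lam p.2 - α))) := by
    intro a ha p
    have := hp2 p
    rw [norm_div, norm_mul, norm_mul, Real.norm_of_nonneg this.le, ← mul_div_assoc]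
    simp only [Real.norm_eq_abs]
    gcongr
    · exact ha _
    · exact ha _
  have hsum : Summable (fun p : ℕ × ℕ => (ec p.1 x₀ * ec p.2 x₀ * ⟪Q (e p.1), e p.2⟫)
      / ((lam p.1 - α) + (lam p.2 - α))) :=
    Summable.of_norm_bounded (hA.mul_left (M * M))
      (hgen (fun j => ec j x₀) (fun j => hec_bd j x₀ hx₀'))
  simp only [hterm]
  refine ⟨fun j₁ j₂ => (hAs _ _).summable, fun j₁ => hsum.prod_factor j₁, hsum.prod, ?_⟩
  apply Tendsto.const_mul
  have hev : ∀ᶠ ε : ℝ in nhdsWithin 0 (Set.Ioi 0), 0 < ε ∧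
      Set.Icc (x₀ - ε / 2) (x₀ + ε / 2) ⊆ Set.Icc 0 L := by
    have hr : 0 < min x₀ (L - x₀) := lt_min hx₀.1 (by linarith [hx₀.2])
    filter_upwards [Ioo_mem_nhdsGT hr] with ε hε
    refine ⟨hε.1, Set.Icc_subset_Icc ?_ ?_⟩
    · linarith [hε.1, hε.2, min_le_left x₀ (L - x₀)]
    · linarith [hε.1, hε.2, min_le_right x₀ (L - x₀)]
  have ht : ∀ j, Tendsto (fun ε => ⟪F ε, e j⟫) (nhdsWithin 0 (Set.Ioi 0)) (nhds (ec j x₀)) := by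
    intro j
    refine (aux_avg_tendsto (ec j) (hec_cont j) x₀).congr' ?_
    filter_upwards [hev] with ε hε
    exact (aux_inner L (F ε) (e j) (ec j) (hec_ae j) x₀ ε hε.1 hε.2 (hF ε hε.1)).symm
  have hb : ∀ᶠ ε : ℝ in nhdsWithin 0 (Set.Ioi 0), ∀ j, |⟪F ε, e j⟫| ≤ M := by
    filter_upwards [hev] with ε hε j
    rw [aux_inner L (F ε) (e j) (ec j) (hec_ae j) x₀ ε hε.1 hε.2 (hF ε hε.1)]
    have := aux_avg (ec j) (hec_cont j) x₀ ε 0 M hε.1 (fun x hx => by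
      simpa using hec_bd j x (hε.2 hx))
    simpa using this
  have hI := fun ε => aux_integral e Q lam α κ hκ hμ hA (F ε)
  simp only [hI]
  rw [← hsum.tsum_prod]
  refine tendsto_tsum_of_dominated_convergence (hA.mul_left (M * M)) (fun p => ?_) ?_
  · exact (((ht p.1).mul (ht p.2)).mul_const _).div_const _
  · filter_upwards [hb] with ε hε p
    exact hgen (fun j => ⟪F ε, e j⟫) hε p
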